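/- For a uniformly random polynomial f of degree ≤ 2 over F₂ in n variables (with no constant term), E[ngap(f)²] = 2^{-n}. -/

import Mathlib

open Finset

/-- The sign character of `F₂`. -/
noncomputable def sgnF2 (a : ZMod 2) : ℝ := if a = 0 then 1 else -1

lemma sgnF2_add (a b : ZMod 2) : sgnF2 (a + b) = sgnF2 a * sgnF2 b := by
  have h : ∀ a b : ZMod 2, (a = 0 ∧ b = 0 ∧ a + b = 0) ∨ (a = 0 ∧ b ≠ 0 ∧ a + b ≠ 0) ∨
      (a ≠ 0 ∧ b = 0 ∧ a + b ≠ 0) ∨ (a ≠ 0 ∧ b ≠ 0 ∧ a + b = 0) := by decide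
  unfold sgnF2
  rcases h a b with ⟨h1, h2, h3⟩ | ⟨h1, h2, h3⟩ | ⟨h1, h2, h3⟩ | ⟨h1, h2, h3⟩ <;>
    · first | rw [if_pos h3] | rw [if_neg h3]
      first | rw [if_pos h1] | rw [if_neg h1]
      first | rw [if_pos h2] | rw [if_neg h2]
      norm_num

lemma sgnF2_sq (a : ZMod 2) : sgnF2 a * sgnF2 a = 1 := by
  unfold sgnF2
  split_ifs <;> norm_num

lemma sum_sgnF2 {n : ℕ} (x y : Fin n → ZMod 2) :
    ∑ γ : Fin n → ZMod 2, sgnF2 (∑ i, γ i * x i) * sgnF2 (∑ i, γ i * y i)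
      = if x = y then (2 : ℝ) ^ n else 0 := by
  split_ifs with h
  · subst h
    simp [sgnF2_sq, ZMod.card]
  · obtain ⟨i, hi⟩ := Function.ne_iff.mp h
    have hs : sgnF2 (x i) * sgnF2 (y i) = -1 := by
      have h2 : ∀ a b : ZMod 2, a ≠ b → (a = 0 ∧ b ≠ 0) ∨ (a ≠ 0 ∧ b = 0) := by decide
      unfold sgnF2
      rcases h2 _ _ hi with ⟨h1, h2⟩ | ⟨h1, h2⟩ <;> simp [h1, h2]
    have key : ∀ (γ z : Fin n → ZMod 2),
        sgnF2 (∑ j, (γ + (Pi.single i 1 : Fin n → ZMod 2)) j * z j) = sgnF2 (∑ j, γ j * z j) * sgnF2 (z i) := by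
      intro γ z
      rw [← sgnF2_add]
      congr 1
      simp [add_mul, Finset.sum_add_distrib, Pi.single_apply]
    have e := Equiv.sum_comp (Equiv.addRight (Pi.single i 1 : Fin n → ZMod 2))
      (fun γ => sgnF2 (∑ i, γ i * x i) * sgnF2 (∑ i, γ i * y i))
    simp only [Equiv.coe_addRight, key] at e
    have e2 : ∀ γ : Fin n → ZMod 2,
        sgnF2 (∑ j, γ j * x j) * sgnF2 (x i) * (sgnF2 (∑ j, γ j * y j) * sgnF2 (y i))
        = -(sgnF2 (∑ j, γ j * x j) * sgnF2 (∑ j, γ j * y j)) := by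
      intro γ
      linear_combination (sgnF2 (∑ j, γ j * x j) * sgnF2 (∑ j, γ j * y j)) * hs
    simp only [e2, Finset.sum_neg_distrib] at e
    linarith

lemma inner_moment {n : ℕ} (q : (Fin n → ZMod 2) → ZMod 2) :
    ∑ γ : Fin n → ZMod 2, ((1 / 2 ^ n : ℝ) * ∑ x : Fin n → ZMod 2,
      sgnF2 (q x + ∑ i, γ i * x i)) ^ 2 = 1 := by
  have h : ∀ γ : Fin n → ZMod 2, ((1 / 2 ^ n : ℝ) * ∑ x : Fin n → ZMod 2,
      sgnF2 (q x + ∑ i, γ i * x i)) ^ 2 = (1 / 2 ^ n : ℝ) ^ 2 * ∑ x : Fin n → ZMod 2,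
      ∑ y : Fin n → ZMod 2, (sgnF2 (q x) * sgnF2 (q y)) *
        (sgnF2 (∑ i, γ i * x i) * sgnF2 (∑ i, γ i * y i)) := by
    intro γ
    rw [mul_pow, sq (∑ x, _), Finset.sum_mul_sum]
    congr 1
    refine Finset.sum_congr rfl fun x _ => Finset.sum_congr rfl fun y _ => ?_
    rw [sgnF2_add, sgnF2_add]
    ring
  simp only [h]
  rw [← Finset.mul_sum, Finset.sum_comm]
  have h2 : ∀ x : Fin n → ZMod 2, ∑ γ : Fin n → ZMod 2, ∑ y : Fin n → ZMod 2,
      (sgnF2 (q x) * sgnF2 (q y)) *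
        (sgnF2 (∑ i, γ i * x i) * sgnF2 (∑ i, γ i * y i)) = 2 ^ n := by
    intro x
    rw [Finset.sum_comm]
    simp only [← Finset.mul_sum, sum_sgnF2]
    simp [sgnF2_sq]
  simp only [h2]
  simp [ZMod.card]
  field_simp

/-- For a uniformly random polynomial of degree `≤ 2` over `F₂` in `n` variables
(with no constant term), the second moment of the normalized gap is exactly
`E[ngap(f)²] = 2^{-n}`. -/
theorem second_moment_ngap_deg2 (n : ℕ) (hn : 0 < n) :
    (∑ β : {p : Fin n × Fin n // p.1 < p.2} → ZMod 2, ∑ γ : Fin n → ZMod 2,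
        ((1 / 2 ^ n : ℝ) * ∑ x : Fin n → ZMod 2,
          (if (∑ p : {p : Fin n × Fin n // p.1 < p.2}, β p * x p.1.1 * x p.1.2)
              + (∑ i : Fin n, γ i * x i) = 0 then (1 : ℝ) else -1)) ^ 2)
      / ((Fintype.card ({p : Fin n × Fin n // p.1 < p.2} → ZMod 2) : ℝ)
          * (Fintype.card (Fin n → ZMod 2) : ℝ))
    = 2 ^ (-(n : ℤ)) := by
  have h : ∀ β : {p : Fin n × Fin n // p.1 < p.2} → ZMod 2, ∑ γ : Fin n → ZMod 2,
        ((1 / 2 ^ n : ℝ) * ∑ x : Fin n → ZMod 2,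
          (if (∑ p : {p : Fin n × Fin n // p.1 < p.2}, β p * x p.1.1 * x p.1.2)
              + (∑ i : Fin n, γ i * x i) = 0 then (1 : ℝ) else -1)) ^ 2 = 1 := fun β =>
    inner_moment (fun x => ∑ p : {p : Fin n × Fin n // p.1 < p.2}, β p * x p.1.1 * x p.1.2)
  rw [Finset.sum_congr rfl fun β _ => h β, Finset.sum_const, Finset.card_univ, nsmul_eq_mul,
    mul_one]
  have hc : (Fintype.card ({p : Fin n × Fin n // p.1 < p.2} → ZMod 2) : ℝ) ≠ 0 :=
    Nat.cast_ne_zero.mpr Fintype.card_ne_zero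
  have hg : (Fintype.card (Fin n → ZMod 2) : ℝ) = 2 ^ n := by simp [ZMod.card]
  rw [hg, zpow_neg, zpow_natCast]
  field_simp
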